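/- arXiv:2205.01022 — 3 statements merged into one kernel-verified Lean document; each statement's English description precedes it below -/
import Mathlib

section
/- Let p = (p_k)_{k≥1} be any probability distribution on a countable alphabet and let m ≥ 2 be an integer. Let p_m = (p_{m,k})_{k≥1} be the m-th order CDOTC of p. Then Σ_{k≥1} p_{m,k} |ln p_{m,k}|² < ∞. -/
open Filter Real Topology

noncomputable section

/-- The `m`-th order conditional distribution of total collision (CDOTC)
of a distribution `p` on a countable alphabet. -/
def cdotc (p : ℕ → ℝ) (m : ℕ) (k : ℕ) : ℝ := p k ^ m / ∑' i, p i ^ m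

/-- **Lemma 2, first part**: for any probability distribution `p` and any order `m ≥ 2`,
the CDOTC satisfies `Σ_k p_{m,k} |ln p_{m,k}|² < ∞`
(note `Real.log 0 = 0`, so terms with `p_{m,k} = 0` vanish). -/
theorem cdotc_summable_log_sq
    (p : ℕ → ℝ) (hp0 : ∀ k, 0 ≤ p k) (hp1 : ∑' k, p k = 1)
    (m : ℕ) (hm : 2 ≤ m) :
    Summable (fun k => cdotc p m k * |Real.log (cdotc p m k)| ^ 2) := by
  have hs : Summable p := by
    by_contra h
    rw [tsum_eq_zero_of_not_summable h] at hp1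
    norm_num at hp1
  have hle : ∀ k, p k ≤ 1 := fun k => hp1 ▸ hs.le_tsum k (fun j _ => hp0 j)
  unfold cdotc
  have hS0 : 0 ≤ ∑' i, p i ^ m := tsum_nonneg (fun i => pow_nonneg (hp0 i) m)
  generalize (∑' i, p i ^ m) = S at hS0
  rcases hS0.eq_or_lt with rfl | hS
  · simp
  refine Summable.of_nonneg_of_le (fun k => ?_) (fun k => ?_)
    (hs.mul_left (2 / S * (m ^ 2 * 4 + Real.log S ^ 2)))
  · exact mul_nonneg (div_nonneg (pow_nonneg (hp0 k) m) hS.le) (sq_nonneg _)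
  have hx0 := hp0 k
  have hx1 := hle k
  generalize p k = x at hx0 hx1
  rcases hx0.eq_or_lt with rfl | hx
  · have : m ≠ 0 := by omega
    simp [this]
  rw [sq_abs, Real.log_div (pow_pos hx m).ne' hS.ne', Real.log_pow]
  have h1 : x ^ m ≤ x ^ 2 := pow_le_pow_of_le_one hx.le hx1 hm
  have h2 : x * Real.log x ^ 2 ≤ 4 := by
    have h := Real.abs_log_mul_self_rpow_lt x (1 / 2) hx hx1 (by norm_num)
    rw [← Real.sqrt_eq_rpow] at h
    have h' := sq_le_sq' (abs_lt.mp h).1.le (abs_lt.mp h).2.le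
    rw [mul_pow, Real.sq_sqrt hx.le] at h'
    linarith
  have h3 : x ^ m * Real.log x ^ 2 ≤ 4 * x := by
    calc x ^ m * Real.log x ^ 2 ≤ x ^ 2 * Real.log x ^ 2 := by gcongr
      _ = x * (x * Real.log x ^ 2) := by ring
      _ ≤ x * 4 := by gcongr
      _ = 4 * x := by ring
  have h4 : x ^ m ≤ x := by nlinarith
  have hxm : 0 < x ^ m := pow_pos hx m
  calc x ^ m / S * (m * Real.log x - Real.log S) ^ 2
      ≤ x ^ m / S * (2 * (m ^ 2 * Real.log x ^ 2 + Real.log S ^ 2)) := by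
        gcongr
        nlinarith [sq_nonneg (m * Real.log x + Real.log S)]
    _ = 2 / S * (m ^ 2 * (x ^ m * Real.log x ^ 2) + Real.log S ^ 2 * x ^ m) := by ring
    _ ≤ 2 / S * (m ^ 2 * (4 * x) + Real.log S ^ 2 * x) := by gcongr
    _ = 2 / S * (m ^ 2 * 4 + Real.log S ^ 2) * x := by ring
end
end

section
/- Let p = (p_k)_{k≥1} be any probability distribution on a countable alphabet and let m ≥ 2 be an integer. Then the m-th order generalized Shannon entropy H_m = −Σ_{k≥1} p_{m,k} ln p_{m,k} is finite, i.e., Σ_{k≥1} p_{m,k} |ln p_{m,k}| < ∞. -/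
open Filter Real Topology

noncomputable section

/-- For any probability distribution `p` on a countable alphabet and any order `m ≥ 2`,
the generalized Shannon entropy `H_m = −Σ_k p_{m,k} ln p_{m,k}` is finite, i.e.
`Σ_k p_{m,k} |ln p_{m,k}| < ∞` (note `Real.log 0 = 0`, giving `0 ln 0 = 0`). -/
theorem gse_finite
    (p : ℕ → ℝ) (hp0 : ∀ k, 0 ≤ p k) (hp1 : ∑' k, p k = 1)
    (m : ℕ) (hm : 2 ≤ m) :
    Summable (fun k => cdotc p m k * |Real.log (cdotc p m k)|) := by
  have hs : Summable p := by
    by_contra h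
    rw [tsum_eq_zero_of_not_summable h] at hp1
    exact zero_ne_one hp1
  have hle : ∀ k, p k ≤ 1 := fun k => hp1 ▸ hs.le_tsum k (fun j _ => hp0 j)
  have hpow : ∀ k, p k ^ m ≤ p k := fun k => pow_le_of_le_one (hp0 k) (hle k) (by omega)
  have hsm : Summable (fun k => p k ^ m) :=
    Summable.of_nonneg_of_le (fun k => pow_nonneg (hp0 k) m) hpow hs
  set S := ∑' i, p i ^ m with hS
  have hS0 : 0 ≤ S := tsum_nonneg (fun k => pow_nonneg (hp0 k) m)
  refine Summable.of_nonneg_of_le (f := fun k => ((m + |Real.log S|) / S) * p k) ?_ ?_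
    (hs.mul_left _)
  · intro k
    exact mul_nonneg (div_nonneg (pow_nonneg (hp0 k) m) hS0) (abs_nonneg _)
  · intro k
    simp only [cdotc, ← hS]
    rcases (hp0 k).eq_or_lt with h0 | hpos
    · rw [← h0, zero_pow (by omega)]
      simp
    · have hSpos : 0 < S :=
        lt_of_lt_of_le (pow_pos hpos m) (hsm.le_tsum k (fun j _ => pow_nonneg (hp0 j) m))
      rw [Real.log_div (pow_pos hpos m).ne' hSpos.ne', Real.log_pow, div_mul_eq_mul_div,
        div_mul_eq_mul_div]
      apply div_le_div_of_nonneg_right _ hS0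
      have h1 : |(m : ℝ) * Real.log (p k) - Real.log S| ≤ m * |Real.log (p k)| + |Real.log S| := by
        refine (abs_sub _ _).trans (le_of_eq ?_)
        rw [abs_mul, Nat.abs_cast]
      have h2 : |Real.log (p k)| * p k ≤ 1 := by
        have := (Real.abs_log_mul_self_lt (p k) hpos (hle k)).le
        rwa [abs_mul, abs_of_pos hpos] at this
      have h3 : p k ^ m ≤ p k * p k := by
        rw [← pow_two]
        exact pow_le_pow_of_le_one (hp0 k) (hle k) hm
      have h4 : p k ^ m * |Real.log (p k)| ≤ p k :=
        calc p k ^ m * |Real.log (p k)| ≤ (p k * p k) * |Real.log (p k)| :=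
              mul_le_mul_of_nonneg_right h3 (abs_nonneg _)
          _ = p k * (|Real.log (p k)| * p k) := by ring
          _ ≤ p k * 1 := mul_le_mul_of_nonneg_left h2 (hp0 k)
          _ = p k := mul_one _
      calc p k ^ m * |(m : ℝ) * Real.log (p k) - Real.log S|
          ≤ p k ^ m * (m * |Real.log (p k)| + |Real.log S|) :=
            mul_le_mul_of_nonneg_left h1 (pow_nonneg (hp0 k) m)
        _ = m * (p k ^ m * |Real.log (p k)|) + |Real.log S| * p k ^ m := by ring
        _ ≤ m * p k + |Real.log S| * p k :=
            add_le_add (mul_le_mul_of_nonneg_left h4 (Nat.cast_nonneg m))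
              (mul_le_mul_of_nonneg_left (hpow k) (abs_nonneg _))
        _ = (m + |Real.log S|) * p k := by ring
end
end

section
/- Fix an integer K ≥ 2 and an integer m ≥ 2. Regard H_m as a function of the free variables (p_1, …, p_{K−1}), with p_K = 1 − Σ_{j=1}^{K−1} p_j, where H_m(p_1, …, p_{K−1}) = −Σ_{k=1}^K p_{m,k} ln p_{m,k} and p_{m,k} = p_k^m / Σ_{i=1}^K p_i^m. Then at any interior point (all p_k > 0), for each i = 1, …, K−1, the partial derivative satisfies ∂H_m/∂p_i = (ln p_{m,K} − ln p_{m,i}) · m p_{m,i}/p_i − m ( p_{m,i}/p_i − p_{m,K}/p_K ) ( H_m + ln p_{m,K} ). -/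
open Filter Real Topology

noncomputable section

/-- The `m`-th order CDOTC of a distribution `p` on a finite alphabet of `K` categories. -/
def cdotcF {K : ℕ} (p : Fin K → ℝ) (m : ℕ) (k : Fin K) : ℝ := p k ^ m / ∑ i, p i ^ m

/-- The `m`-th order generalized Shannon entropy (GSE) of `p` on a finite alphabet. -/
def gseF {K : ℕ} (p : Fin K → ℝ) (m : ℕ) : ℝ :=
  -∑ k, cdotcF p m k * Real.log (cdotcF p m k)

/-- Completing the free variables `(p_1, …, p_{K-1})` to a full probability vector
on `K = J + 1` categories by setting `p_K := 1 − Σ_{j<K} p_j`. -/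
def completeProb {J : ℕ} (v : Fin J → ℝ) : Fin (J + 1) → ℝ :=
  Fin.snoc v (1 - ∑ j, v j)

/-- Derivative of the generalized entropy along a differentiable curve. -/
theorem gse_curve {n : ℕ} (p : ℝ → Fin n → ℝ) (d : Fin n → ℝ) (x : ℝ) (m : ℕ) (k₀ : Fin n)
    (hp : ∀ k, HasDerivAt (fun t => p t k) (d k) x) (hpos : ∀ k, 0 < p x k) :
    HasDerivAt (fun t => gseF (p t) m)
      (-(∑ k, d k * (m * cdotcF (p x) m k / p x k * Real.log (cdotcF (p x) m k)))
        - (∑ k, d k * (m * cdotcF (p x) m k / p x k)) * gseF (p x) m) x := by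
  have hS : 0 < ∑ i, p x i ^ m :=
    Finset.sum_pos (fun k _ => pow_pos (hpos k) m) ⟨k₀, Finset.mem_univ _⟩
  have hqpos : ∀ k, 0 < cdotcF (p x) m k := fun k => div_pos (pow_pos (hpos k) m) hS
  have hpow : ∀ k, HasDerivAt (fun t => p t k ^ m) (m * p x k ^ m / p x k * d k) x := by
    intro k
    refine ((hp k).fun_pow m).congr_deriv ?_
    have := (hpos k).ne'
    rcases m with _ | m
    · simp
    · simp only [Nat.add_sub_cancel]
      field_simp
      ring
  have hsum : HasDerivAt (fun t => ∑ k, p t k ^ m) (∑ k, m * p x k ^ m / p x k * d k) x :=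
    HasDerivAt.fun_sum fun k _ => hpow k
  set B : ℝ := ∑ k, d k * (m * cdotcF (p x) m k / p x k) with hB
  have hBS : ∑ k, m * p x k ^ m / p x k * d k = B * ∑ i, p x i ^ m := by
    rw [hB, Finset.sum_mul]
    refine Finset.sum_congr rfl fun k _ => ?_
    have := (hpos k).ne'
    have := hS.ne'
    unfold cdotcF
    field_simp
  rw [hBS] at hsum
  have hq : ∀ k, HasDerivAt (fun t => cdotcF (p t) m k)
      (d k * (m * cdotcF (p x) m k / p x k) - B * cdotcF (p x) m k) x := by
    intro k
    refine ((hpow k).fun_div hsum hS.ne').congr_deriv ?_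
    have := (hpos k).ne'
    have := hS.ne'
    unfold cdotcF
    field_simp
  have hH := (HasDerivAt.fun_sum (u := Finset.univ)
    fun k _ => (hq k).fun_mul ((hq k).log (hqpos k).ne')).fun_neg
  have h1 : ∑ k, cdotcF (p x) m k = 1 := by
    unfold cdotcF
    rw [← Finset.sum_div, div_self hS.ne']
  refine hH.congr_deriv ?_
  have e : ∀ k, (d k * (m * cdotcF (p x) m k / p x k) - B * cdotcF (p x) m k)
        * Real.log (cdotcF (p x) m k)
      + cdotcF (p x) m k * ((d k * (m * cdotcF (p x) m k / p x k) - B * cdotcF (p x) m k)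
        / cdotcF (p x) m k)
      = d k * (m * cdotcF (p x) m k / p x k * Real.log (cdotcF (p x) m k))
        - B * (cdotcF (p x) m k * Real.log (cdotcF (p x) m k))
        + d k * (m * cdotcF (p x) m k / p x k) - B * cdotcF (p x) m k := by
    intro k
    rw [mul_div_cancel₀ _ (hqpos k).ne']
    ring
  rw [Finset.sum_congr rfl fun k _ => e k, Finset.sum_sub_distrib, Finset.sum_add_distrib,
    Finset.sum_sub_distrib, ← Finset.mul_sum, ← Finset.mul_sum, h1, ← hB]
  unfold gseF
  ring

/-- **The partial-derivative computation in the proof of Lemma 3**: regarding `H_m` as a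
function of the free variables `(p_1, …, p_{K−1})` (with `K = J + 1 ≥ 2` and
`p_K = 1 − Σ_{j<K} p_j`), at any interior point and for each `i ≤ K − 1`,
`∂H_m/∂p_i = (ln p_{m,K} − ln p_{m,i}) · m p_{m,i}/p_i
  − m (p_{m,i}/p_i − p_{m,K}/p_K)(H_m + ln p_{m,K})`. -/
theorem gse_partial_derivative
    (J : ℕ) (hJ : 1 ≤ J) (m : ℕ) (hm : 2 ≤ m)
    (v : Fin J → ℝ) (hpos : ∀ k, 0 < completeProb v k) (i : Fin J) :
    HasDerivAt (fun t => gseF (completeProb (Function.update v i t)) m)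
      ((Real.log (cdotcF (completeProb v) m (Fin.last J))
          - Real.log (cdotcF (completeProb v) m i.castSucc))
        * (m * cdotcF (completeProb v) m i.castSucc / completeProb v i.castSucc)
      - m * (cdotcF (completeProb v) m i.castSucc / completeProb v i.castSucc
          - cdotcF (completeProb v) m (Fin.last J) / completeProb v (Fin.last J))
        * (gseF (completeProb v) m + Real.log (cdotcF (completeProb v) m (Fin.last J))))
      (v i) := by
  have hx : completeProb (Function.update v i (v i)) = completeProb v := by
    rw [Function.update_eq_self]
  have hd : ∀ k, HasDerivAt (fun t => completeProb (Function.update v i t) k)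
      ((if k = i.castSucc then 1 else 0) - (if k = Fin.last J then 1 else 0)) (v i) := by
    have hu : ∀ j, HasDerivAt (fun t => Function.update v i t j) (if j = i then 1 else 0) (v i) := by
      intro j
      by_cases h : j = i
      · subst h
        simpa using hasDerivAt_id' (v j)
      · simpa [h] using hasDerivAt_const (v i) (v j)
    intro k
    refine Fin.lastCases ?_ (fun j => ?_) k
    · have := (HasDerivAt.fun_sum (u := Finset.univ) fun j _ => hu j).const_sub 1
      simpa [completeProb, (Fin.castSucc_lt_last i).ne'] using this
    · simpa [completeProb, (Fin.castSucc_lt_last j).ne] using hu j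
  have h := gse_curve (fun t => completeProb (Function.update v i t)) _ (v i) m (Fin.last J) hd
    (by simpa [hx] using hpos)
  refine h.congr_deriv ?_
  simp only [hx, sub_mul, Finset.sum_sub_distrib, ite_mul, one_mul, zero_mul, Finset.sum_ite_eq',
    Finset.mem_univ, if_true]
  ring
end
end
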